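/- Let T > 0 and c ∈ ℝ. Let λ, h : [0,T] → ℝ be measurable and Lebesgue-integrable on [0,T] with h(s) ≥ 0 for almost every s ∈ [0,T]. Let k : [0,T] → ℝ be nondecreasing with k(0) = 0. Suppose f : [0,T] → ℝ is measurable, the function s ↦ λ(s) f(s) is integrable on [0,T], and f satisfies the integral equation f(t) = c + ∫₀ᵗ (λ(s) f(s) + h(s)) ds + k(t) for every t ∈ [0,T]. Then for every t ∈ [0,T], f(t) ≥ c · exp(∫₀ᵗ λ(s) ds) + ∫₀ᵗ exp(∫ₛᵗ λ(u) du) h(s) ds. In particular, if c ≥ 0 then f(t) ≥ 0 for all t ∈ [0,T], and if c > 0 then f(t) > 0 for all t ∈ [0,T]. -/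

import Mathlib

/-! The difference `g = f - k` is absolutely continuous, with `g' = lam * f + h` almost everywhere.
Multiplying by the integrating factor `E t = exp (-∫₀ᵗ lam)`, which is absolutely continuous with
`E' = -lam * E`, gives `(E * g)' = E * h - k * E'`, hence
`E t * g t = c + ∫₀ᵗ E * h - ∫₀ᵗ k * E'`.

The sign of `lam` is arbitrary, so the last integral has to be compared with `E t * k t` using only
the monotonicity of `k`. This is a form of the second mean value theorem
(`integral_monotone_mul_le`): writing `k s` as the integral over `y` of the indicator of `y < k s`
and exchanging the integrals, `∫₀ᵗ k * E'` becomes the integral over `0 < y ≤ k t` of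
integrals of `E'` over end segments `(a, t]`, each of which equals `E t - E a ≤ E t`. Therefore
`E t * f t ≥ c + ∫₀ᵗ E * h`, and dividing by `E t` gives the claim. -/

open MeasureTheory intervalIntegral

/-- A Lipschitz function of a real-valued absolutely continuous function is absolutely continuous. -/
lemma AbsolutelyContinuousOnInterval.lipschitzOnWith_comp {φ F : ℝ → ℝ} {a b : ℝ} {K : NNReal}
    {S : Set ℝ} (hφ : LipschitzOnWith K φ S) (hF : AbsolutelyContinuousOnInterval F a b)
    (hS : Set.MapsTo F (Set.uIcc a b) S) :
    AbsolutelyContinuousOnInterval (fun x => φ (F x)) a b := by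
  rw [absolutelyContinuousOnInterval_iff] at hF ⊢
  intro ε hε
  obtain ⟨δ, hδ, H⟩ := hF (ε / (K + 1)) (by positivity)
  refine ⟨δ, hδ, fun I hI hlen => ?_⟩
  have hK := H I hI hlen
  calc ∑ i ∈ Finset.range I.1, dist (φ (F (I.2 i).1)) (φ (F (I.2 i).2))
      ≤ ∑ i ∈ Finset.range I.1, K * dist (F (I.2 i).1) (F (I.2 i).2) := by
        refine Finset.sum_le_sum fun i hi => ?_
        exact hφ.dist_le_mul _ (hS (hI.1 i hi).1) _ (hS (hI.1 i hi).2)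
    _ = K * ∑ i ∈ Finset.range I.1, dist (F (I.2 i).1) (F (I.2 i).2) := by
        rw [Finset.mul_sum]
    _ ≤ K * (ε / (K + 1)) := by gcongr
    _ < (K + 1) * (ε / (K + 1)) := by gcongr; linarith
    _ = ε := by field_simp

lemma AbsolutelyContinuousOnInterval.exp {F : ℝ → ℝ} {a b : ℝ}
    (hF : AbsolutelyContinuousOnInterval F a b) :
    AbsolutelyContinuousOnInterval (fun x => Real.exp (F x)) a b := by
  obtain ⟨C, hC⟩ := hF.exists_bound
  have hexp : ContDiffOn ℝ 1 Real.exp (Set.Icc (-C) C) := Real.contDiff_exp.contDiffOn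
  obtain ⟨K, hK⟩ := hexp.exists_lipschitzOnWith (by decide) (convex_Icc _ _) isCompact_Icc
  exact hF.lipschitzOnWith_comp hK fun x hx => abs_le.mp (hC x hx)

lemma AbsolutelyContinuousOnInterval.integral_eq_sub_of_ae {F F' : ℝ → ℝ} {a b : ℝ}
    (hF : AbsolutelyContinuousOnInterval F a b)
    (hF' : ∀ᵐ x, x ∈ Set.uIcc a b → HasDerivAt F (F' x) x) :
    ∫ x in a..b, F' x = F b - F a := by
  rw [← hF.integral_deriv_eq_sub]
  refine intervalIntegral.integral_congr_ae ?_
  filter_upwards [hF'] with x hx hmem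
  exact (hx (Set.uIoc_subset_uIcc hmem)).deriv.symm

/-- An upper level set of a monotone function cuts an end segment `(a, t]` off `(0, t]`, up to a
null set. -/
lemma exists_Ioc_ae_eq_superlevel {k : ℝ → ℝ} (hk : Monotone k) {t : ℝ} (ht : 0 ≤ t) (y : ℝ) :
    ∃ a ∈ Set.Icc 0 t, (Set.Ioc 0 t ∩ {s | y < k s} : Set ℝ) =ᵐ[volume] Set.Ioc a t := by
  set A : Set ℝ := insert t (Set.Ioc 0 t ∩ {s | y < k s}) with hA
  have hbdd : BddBelow A := ⟨0, by rintro x (rfl | hx); exacts [ht, hx.1.1.le]⟩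
  have ha0 : 0 ≤ sInf A := le_csInf ⟨t, Or.inl rfl⟩ (by rintro x (rfl | hx); exacts [ht, hx.1.1.le])
  have hat : sInf A ≤ t := csInf_le hbdd (Or.inl rfl)
  refine ⟨sInf A, ⟨ha0, hat⟩, ?_⟩
  -- the two sets can only differ at the points `sInf A` and `t`
  have h1 : ∀ᵐ x : ℝ, x ≠ sInf A := by simp [ae_iff]
  have h2 : ∀ᵐ x : ℝ, x ≠ t := by simp [ae_iff]
  filter_upwards [h1, h2] with x hx1 hx2
  refine propext ⟨fun hx => ?_, fun hx => ?_⟩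
  · exact ⟨lt_of_le_of_ne (csInf_le hbdd (Or.inr hx)) (Ne.symm hx1), hx.1.2⟩
  · obtain ⟨z, hz, hzx⟩ := exists_lt_of_csInf_lt ⟨t, Or.inl rfl⟩ hx.1
    rcases hz with rfl | hz
    · exact absurd hx.2 (not_le.mpr hzx)
    · exact ⟨⟨ha0.trans_lt hx.1, hx.2⟩, lt_of_lt_of_le hz.2 (hk hzx.le)⟩

/-- One-sided second mean value theorem: if all integrals of `ψ` over end segments of `[0, t]` are
at most `M` and `k` is nondecreasing from `k 0 = 0`, then `∫₀ᵗ k * ψ ≤ k t * M`. -/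
lemma integral_monotone_mul_le {k ψ : ℝ → ℝ} (hk : Monotone k) (hk0 : k 0 = 0) {t M : ℝ}
    (ht : 0 ≤ t) (hψ : IntervalIntegrable ψ volume 0 t)
    (hM : ∀ a ∈ Set.Icc 0 t, ∫ s in a..t, ψ s ≤ M) :
    ∫ s in (0 : ℝ)..t, k s * ψ s ≤ k t * M := by
  have hkt : 0 ≤ k t := hk0 ▸ hk ht
  have hψ' : IntegrableOn ψ (Set.Ioc 0 t) := (intervalIntegrable_iff_integrableOn_Ioc_of_le ht).1 hψ
  set D : Set (ℝ × ℝ) := {p | p.2 < k p.1} with hD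
  have hDm : MeasurableSet D := measurableSet_lt measurable_snd (hk.measurable.comp measurable_fst)
  -- the layer-cake kernel
  set G : ℝ → ℝ → ℝ := fun s y => D.indicator (fun p => ψ p.1) (s, y) with hG
  have hint : Integrable (Function.uncurry G)
      ((volume.restrict (Set.Ioc 0 t)).prod (volume.restrict (Set.Ioc 0 (k t)))) := by
    have h1 : Integrable (fun p : ℝ × ℝ => ψ p.1)
        ((volume.restrict (Set.Ioc 0 t)).prod (volume.restrict (Set.Ioc 0 (k t)))) :=
      Integrable.comp_fst hψ' _
    exact h1.indicator hDm
  have hL : ∀ s ∈ Set.Ioc 0 t, ∫ y in Set.Ioc 0 (k t), G s y = k s * ψ s := by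
    intro s hs
    have hks : 0 ≤ k s := hk0 ▸ hk hs.1.le
    have hkst : k s ≤ k t := hk hs.2
    have : ∀ y, G s y = (Set.Iio (k s)).indicator (fun _ => ψ s) y := fun y => by
      simp [hG, hD, Set.indicator]
    simp_rw [this]
    rw [setIntegral_indicator measurableSet_Iio, setIntegral_const, smul_eq_mul]
    congr 1
    have : Set.Ioc 0 (k t) ∩ Set.Iio (k s) = Set.Ioo 0 (k s) := by
      ext y; simp only [Set.mem_inter_iff, Set.mem_Ioc, Set.mem_Iio, Set.mem_Ioo]
      constructor
      · rintro ⟨⟨h1, _⟩, h2⟩; exact ⟨h1, h2⟩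
      · rintro ⟨h1, h2⟩; exact ⟨⟨h1, (h2.le.trans hkst)⟩, h2⟩
    rw [this]; simp [Measure.real, hks]
  have hR : ∀ y, ∫ s in Set.Ioc 0 t, G s y ≤ M := by
    intro y
    have : ∀ s, G s y = {s | y < k s}.indicator ψ s := fun s => by
      simp [hG, hD, Set.indicator]
    simp_rw [this]
    rw [setIntegral_indicator (measurableSet_lt measurable_const hk.measurable)]
    obtain ⟨a, ha, hae⟩ := exists_Ioc_ae_eq_superlevel hk ht y
    rw [setIntegral_congr_set hae, ← intervalIntegral.integral_of_le ha.2]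
    exact hM a ha
  calc ∫ s in (0 : ℝ)..t, k s * ψ s
      = ∫ s in Set.Ioc 0 t, ∫ y in Set.Ioc 0 (k t), G s y := by
        rw [intervalIntegral.integral_of_le ht]
        exact (setIntegral_congr_fun measurableSet_Ioc hL).symm
    _ = ∫ y in Set.Ioc 0 (k t), ∫ s in Set.Ioc 0 t, G s y := integral_integral_swap hint
    _ ≤ ∫ _ in Set.Ioc 0 (k t), M :=
        integral_mono hint.integral_prod_right (integrable_const M) hR
    _ = k t * M := by simp [hkt]

/-- Deterministic, pathwise core of the comparison lemma (Lemma 3.1): if `f` solves the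
integral equation `f t = c + ∫₀ᵗ (λ s * f s + h s) ds + k t` on `[0,T]` with `h ≥ 0`
a.e. on `[0,T]` and `k` nondecreasing with `k 0 = 0`, then
`f t ≥ c * exp(∫₀ᵗ λ) + ∫₀ᵗ exp(∫ₛᵗ λ) h s ds` for all `t ∈ [0,T]`; in particular
`c ≥ 0` forces `f ≥ 0` on `[0,T]` and `c > 0` forces `f > 0` on `[0,T]`. -/
theorem deterministic_comparison
    (T : ℝ) (hT : 0 < T) (c : ℝ) (lam h k f : ℝ → ℝ)
    (hlam_meas : Measurable lam)
    (hlam_int : IntervalIntegrable lam volume 0 T)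
    (hh_meas : Measurable h)
    (hh_int : IntervalIntegrable h volume 0 T)
    (hh_nonneg : ∀ᵐ s ∂(volume.restrict (Set.Icc (0 : ℝ) T)), 0 ≤ h s)
    (hk_mono : MonotoneOn k (Set.Icc (0 : ℝ) T)) (hk0 : k 0 = 0)
    (hf_meas : Measurable f)
    (hlf_int : IntervalIntegrable (fun s => lam s * f s) volume 0 T)
    (heq : ∀ t ∈ Set.Icc (0 : ℝ) T,
      f t = c + (∫ s in (0 : ℝ)..t, (lam s * f s + h s)) + k t) :
    (∀ t ∈ Set.Icc (0 : ℝ) T,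
      c * Real.exp (∫ s in (0 : ℝ)..t, lam s)
          + (∫ s in (0 : ℝ)..t, Real.exp (∫ u in s..t, lam u) * h s) ≤ f t) ∧
    (0 ≤ c → ∀ t ∈ Set.Icc (0 : ℝ) T, 0 ≤ f t) ∧
    (0 < c → ∀ t ∈ Set.Icc (0 : ℝ) T, 0 < f t) := by
  -- extend `k` to a monotone function on the line, so that it is measurable
  obtain ⟨k', hk', hkk'⟩ := hk_mono.exists_monotone_extension
    ⟨k 0, Set.forall_mem_image.2 fun x hx => hk_mono (Set.left_mem_Icc.2 hT.le) hx hx.1⟩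
    ⟨k T, Set.forall_mem_image.2 fun x hx => hk_mono hx (Set.right_mem_Icc.2 hT.le) hx.2⟩
  have hk'0 : k' 0 = 0 := by rw [← hkk' (Set.left_mem_Icc.2 hT.le), hk0]
  set L : ℝ → ℝ := fun t => ∫ s in (0 : ℝ)..t, lam s with hL
  set E : ℝ → ℝ := fun t => Real.exp (-L t) with hE
  set g : ℝ → ℝ := fun t => c + ∫ s in (0 : ℝ)..t, (lam s * f s + h s) with hg
  have hIcc : Set.uIcc 0 T = Set.Icc 0 T := Set.uIcc_of_le hT.le
  have h0mem : (0 : ℝ) ∈ Set.uIcc 0 T := Set.left_mem_uIcc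
  have hLac : AbsolutelyContinuousOnInterval L 0 T :=
    hlam_int.absolutelyContinuousOnInterval_intervalIntegral h0mem
  have hEac : AbsolutelyContinuousOnInterval E 0 T := hLac.neg.exp
  have hgac : AbsolutelyContinuousOnInterval g 0 T :=
    AbsolutelyContinuousOnInterval.add
      (LipschitzOnWith.absolutelyContinuousOnInterval (LipschitzWith.const c).lipschitzOnWith)
      ((hlf_int.add hh_int).absolutelyContinuousOnInterval_intervalIntegral h0mem)
  have hE' : ∀ᵐ x, x ∈ Set.uIcc 0 T → HasDerivAt E (-lam x * E x) x := by
    filter_upwards [hlam_int.ae_hasDerivAt_integral] with x hx hmem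
    have := (hx hmem 0 h0mem).neg.exp
    rw [mul_comm]
    exact this
  have hg' : ∀ᵐ x, x ∈ Set.uIcc 0 T → HasDerivAt g (lam x * f x + h x) x := by
    filter_upwards [(hlf_int.add hh_int).ae_hasDerivAt_integral] with x hx hmem
    exact (hx hmem 0 h0mem).const_add c
  have hmain : ∀ t ∈ Set.Icc (0 : ℝ) T, c + ∫ s in (0 : ℝ)..t, E s * h s ≤ E t * f t := by
    intro t ht
    have hsub : ∀ a ∈ Set.Icc 0 t, Set.uIcc a t ⊆ Set.uIcc 0 T := fun a ha => by
      rw [Set.uIcc_of_le ha.2, hIcc]; exact Set.Icc_subset_Icc ha.1 ht.2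
    have hsub0 := hsub 0 ⟨le_rfl, ht.1⟩
    have hEc : ContinuousOn E (Set.uIcc 0 t) := hEac.continuousOn.mono hsub0
    have hψ : IntervalIntegrable (fun s => -lam s * E s) volume 0 t :=
      (hlam_int.mono_set hsub0).neg.mul_continuousOn hEc
    have hEh : IntervalIntegrable (fun s => E s * h s) volume 0 t :=
      (hh_int.mono_set hsub0).continuousOn_mul hEc
    have hkψ : IntervalIntegrable (fun s => k' s * (-lam s * E s)) volume 0 t := by
      rw [intervalIntegrable_iff_integrableOn_Ioc_of_le ht.1] at hψ ⊢
      refine hψ.bdd_mul (c := k' t) hk'.measurable.aestronglyMeasurable ?_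
      refine (ae_restrict_iff' measurableSet_Ioc).2 (Filter.Eventually.of_forall fun s hs => ?_)
      rw [Real.norm_of_nonneg (hk'0 ▸ hk' hs.1.le)]
      exact hk' hs.2
    have hle : ∫ s in (0 : ℝ)..t, k' s * (-lam s * E s) ≤ k' t * E t := by
      refine integral_monotone_mul_le hk' hk'0 ht.1 hψ fun a ha => ?_
      rw [(hEac.mono (hsub a ha)).integral_eq_sub_of_ae
        (hE'.mono fun x hx hmem => hx (hsub a ha hmem))]
      linarith [Real.exp_pos (-L a)]
    have hfg : ∀ x ∈ Set.uIcc 0 T, f x = g x + k' x := fun x hx => by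
      rw [hIcc] at hx
      rw [heq x hx, ← hkk' hx]
    have hprod : ∫ s in (0 : ℝ)..t, (E s * h s - k' s * (-lam s * E s)) = E t * g t - E 0 * g 0 := by
      refine ((hEac.fun_mul hgac).mono hsub0).integral_eq_sub_of_ae ?_
      filter_upwards [hE', hg'] with x hx1 hx2 hmem
      have hx := hsub0 hmem
      refine ((hx1 hx).mul (hx2 hx)).congr_deriv ?_
      rw [hfg x hx]; ring
    have hE0 : E 0 = 1 := by simp [hE, hL]
    have hg0 : g 0 = c := by simp [hg]
    rw [intervalIntegral.integral_sub hEh hkψ, hE0, hg0] at hprod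
    rw [hfg t (hsub0 Set.right_mem_uIcc)]
    linarith
  have hfirst : ∀ t ∈ Set.Icc (0 : ℝ) T, c * Real.exp (∫ s in (0 : ℝ)..t, lam s)
      + (∫ s in (0 : ℝ)..t, Real.exp (∫ u in s..t, lam u) * h s) ≤ f t := by
    intro t ht
    have hint : ∫ s in (0 : ℝ)..t, Real.exp (∫ u in s..t, lam u) * h s
        = Real.exp (L t) * ∫ s in (0 : ℝ)..t, E s * h s := by
      rw [← intervalIntegral.integral_const_mul]
      refine intervalIntegral.integral_congr fun s hs => ?_
      rw [Set.uIcc_of_le ht.1] at hs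
      have h1 : IntervalIntegrable lam volume 0 s := hlam_int.mono_set (by
        rw [Set.uIcc_of_le hs.1, hIcc]; exact Set.Icc_subset_Icc le_rfl (hs.2.trans ht.2))
      have h2 : IntervalIntegrable lam volume 0 t := hlam_int.mono_set (by
        rw [Set.uIcc_of_le ht.1, hIcc]; exact Set.Icc_subset_Icc le_rfl ht.2)
      have h3 : ∫ u in s..t, lam u = L t + -L s := by
        rw [← intervalIntegral.integral_interval_sub_left h2 h1]; ring
      simp only [h3, Real.exp_add, hE]
      ring
    have hEL : Real.exp (L t) * E t = 1 := by simp [hE, ← Real.exp_add]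
    have := mul_le_mul_of_nonneg_left (hmain t ht) (Real.exp_pos (L t)).le
    rw [← mul_assoc, hEL, one_mul] at this
    rw [hint]
    linarith
  have hpos : ∀ t ∈ Set.Icc (0 : ℝ) T,
      0 ≤ ∫ s in (0 : ℝ)..t, Real.exp (∫ u in s..t, lam u) * h s := by
    intro t ht
    refine intervalIntegral.integral_nonneg_of_ae_restrict ht.1 ?_
    filter_upwards [ae_restrict_of_ae_restrict_of_subset (Set.Icc_subset_Icc le_rfl ht.2) hh_nonneg]
      with s hs
    exact mul_nonneg (Real.exp_pos _).le hs
  refine ⟨hfirst, fun hc t ht => ?_, fun hc t ht => ?_⟩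
  · have := mul_nonneg hc (Real.exp_pos (∫ s in (0 : ℝ)..t, lam s)).le
    linarith [hfirst t ht, hpos t ht]
  · have := mul_pos hc (Real.exp_pos (∫ s in (0 : ℝ)..t, lam s))
    linarith [hfirst t ht, hpos t ht]
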